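/- A complete first-order theory T in a countable language is ℵ₀-categorical if and only if for every n, T has only finitely many complete n-types. -/

import Mathlib

open FirstOrder FirstOrder.Language Cardinal

/-!
In the compact Hausdorff space of complete types in variables `x₀, x₁, …`, each Henkin condition
is open and dense, so a generic type is the type of an enumeration of a countable model. Restricting
types to finitely many variables is continuous and open, so preimages of meagre sets of types are
meagre: a generic type therefore also omits any given non-isolated `n`-type.

If `T` is `ℵ₀`-categorical, then a non-isolated `n`-type would be realized in one countable model
and omitted in another, which are isomorphic if infinite. So all `n`-types are isolated, and by
compactness there are finitely many. A complete theory with a finite model has finitely many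
`n`-types anyway, as the types realized in that model are dense. Conversely, if there are finitely
many `n`-types for each `n`, they are all isolated, hence finite partial elementary maps extend by
one element at a time, and countable models are isomorphic by back-and-forth.
-/

namespace RyllNardzewski

open Theory Theory.CompleteType Set Topology

universe u v w w'

variable {L : FirstOrder.Language.{u, v}} {α : Type w} {β : Type w'}

section Formula

theorem realize_congr_of_eqOn_freeVarFinset [DecidableEq α] {M : Type*} [L.Structure M]
    (φ : L.Formula α) {x y : α → M} (h : EqOn x y (BoundedFormula.freeVarFinset φ)) :
    φ.Realize x ↔ φ.Realize y := by
  unfold Formula.Realize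
  rw [← BoundedFormula.realize_restrictFreeVar' (φ := φ) subset_rfl (v := y),
    BoundedFormula.realize_restrictFreeVar x]
  exact fun a => (h a.2).symm

theorem realize_iff_realize_relabel_isEmptyElim [IsEmpty α] {M : Type*} [L.Structure M]
    (φ : L.Formula α) (x : α → M) : φ.Realize x ↔ M ⊨ (φ.relabel isEmptyElim : L.Sentence) := by
  rw [Sentence.Realize, Formula.realize_relabel, Subsingleton.elim x]

open Classical in
/-- The projection of a formula `φ(y)` along a map of variables `f`: the formula
`∃ y, φ(y) ∧ ⋀ i, xᵢ = y_{f(i)}`, in which only the variables `y` that are free in `φ` or in the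
range of `f` are quantified. -/
noncomputable def project [Finite α] (f : α → β) (φ : L.Formula β) : L.Formula α :=
  let γ : Set β := BoundedFormula.freeVarFinset φ ∪ range f
  have : Finite γ := ((Finset.finite_toSet _).union (finite_range f)).to_subtype
  let φγ : L.Formula γ := BoundedFormula.restrictFreeVar φ (inclusion subset_union_left)
  (φγ.relabel Sum.inr ⊓ Formula.iInf fun i : α =>
    (Term.var (Sum.inl i)).equal (Term.var (Sum.inr ⟨f i, .inr ⟨i, rfl⟩⟩)) :
      L.Formula (α ⊕ γ)).iExs γ

theorem realize_project [Finite α] {M : Type*} [L.Structure M] [Nonempty M] (f : α → β)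
    (φ : L.Formula β) (x : α → M) :
    (project f φ).Realize x ↔ ∃ y : β → M, φ.Realize y ∧ y ∘ f = x := by
  classical
  let γ : Set β := BoundedFormula.freeVarFinset φ ∪ range f
  have hγ : Function.Surjective fun y : β → M => y ∘ ((↑) : γ → β) :=
    Subtype.val_injective.surjective_comp_right
  have hφ (y : β → M) : Formula.Realize
      (BoundedFormula.restrictFreeVar φ (inclusion subset_union_left) : L.Formula γ)
      (y ∘ (↑)) ↔ φ.Realize y :=
    BoundedFormula.realize_restrictFreeVar' (φ := φ) subset_union_left
  simp only [project, Formula.realize_iExs, Formula.realize_inf, Formula.realize_iInf,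
    Formula.realize_relabel, Formula.realize_equal, Term.realize_var, Sum.elim_comp_inr,
    Sum.elim_inl, Sum.elim_inr]
  rw [hγ.exists]
  refine exists_congr fun y => and_congr (by convert hφ y) ?_
  simp only [Function.comp_apply, funext_iff, eq_comm]

end Formula

section CompleteType

variable {T : L.Theory}

theorem exists_typeOf_eq (p : T.CompleteType α) :
    ∃ (M : ModelType.{u, v, max u v w} T) (x : α → M), T.typeOf x = p :=
  exists_modelType_is_realized_in T p

theorem ext_formula {p q : T.CompleteType α}
    (h : ∀ φ : L.Formula α, Formula.equivSentence φ ∈ p ↔ Formula.equivSentence φ ∈ q) :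
    p = q :=
  SetLike.ext <| Formula.equivSentence.surjective.forall.2 h

theorem isOpen_setOf_formula_mem (φ : L.Formula α) :
    IsOpen {p : T.CompleteType α | Formula.equivSentence φ ∈ p} :=
  _root_.CompleteType.isOpen_typesWith _

theorem isClosed_setOf_formula_mem (φ : L.Formula α) :
    IsClosed {p : T.CompleteType α | Formula.equivSentence φ ∈ p} :=
  _root_.CompleteType.isClosed_typesWith _

theorem isOpen_iff_formula {s : Set (T.CompleteType α)} :
    IsOpen s ↔ ∀ p ∈ s, ∃ φ : L.Formula α, Formula.equivSentence φ ∈ p ∧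
      ∀ q : T.CompleteType α, Formula.equivSentence φ ∈ q → q ∈ s := by
  rw [_root_.CompleteType.isTopologicalBasis_range_typesWith.isOpen_iff]
  simp only [exists_range_iff, Formula.equivSentence.surjective.exists, subset_def,
    mem_typesWith_iff]

theorem dense_iff_formula {s : Set (T.CompleteType α)} :
    Dense s ↔ ∀ (φ : L.Formula α) (M : ModelType.{u, v, max u v w} T) (x : α → M), φ.Realize x →
      ∃ p ∈ s, Formula.equivSentence φ ∈ p := by
  refine dense_iff_inter_open.trans ⟨fun h φ M x hφ => ?_, fun h U hU ⟨p, hp⟩ => ?_⟩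
  · obtain ⟨p, hφp, hps⟩ := h _ (isOpen_setOf_formula_mem (T := T) φ)
      ⟨T.typeOf x, formula_mem_typeOf (T := T).2 hφ⟩
    exact ⟨p, hps, hφp⟩
  · obtain ⟨φ, hφp, hφU⟩ := isOpen_iff_formula.1 hU p hp
    obtain ⟨M, x, rfl⟩ := exists_typeOf_eq p
    obtain ⟨q, hqs, hφq⟩ := h φ M x (formula_mem_typeOf.1 hφp)
    exact ⟨q, hφU q hφq, hqs⟩

section typeOf

variable {M : Type*} [L.Structure M] [Nonempty M] [M ⊨ T]
  {N : Type*} [L.Structure N] [Nonempty N] [N ⊨ T]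

theorem typeOf_eq_typeOf_iff {x : α → M} {y : α → N} :
    T.typeOf x = T.typeOf y ↔ ∀ φ : L.Formula α, φ.Realize x ↔ φ.Realize y := by
  refine ⟨fun h φ => ?_, fun h => ext_formula fun φ => ?_⟩
  · rw [← formula_mem_typeOf (T := T), h, formula_mem_typeOf]
  · rw [formula_mem_typeOf, formula_mem_typeOf, h]

theorem typeOf_comp_elementaryEmbedding (e : M ↪ₑ[L] N) (x : α → M) :
    T.typeOf (e ∘ x) = T.typeOf x :=
  typeOf_eq_typeOf_iff.2 fun φ => e.map_formula φ x

theorem typeOf_eq_typeOf_of_isEmpty [IsEmpty α] (hT : T.IsComplete) (x : α → M) (y : α → N) :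
    T.typeOf x = T.typeOf y :=
  typeOf_eq_typeOf_iff.2 fun φ => by
    rw [realize_iff_realize_relabel_isEmptyElim, realize_iff_realize_relabel_isEmptyElim,
      hT.realize_sentence_iff, hT.realize_sentence_iff]

end typeOf

/-- The restriction of complete types along a map of variables `f`, sending the type of a tuple
`x` to the type of `x ∘ f`. It is defined through a chosen realization of the type;
`restrict_typeOf` shows that the choice does not matter. -/
noncomputable def restrict (f : α → β) (p : T.CompleteType β) : T.CompleteType α :=
  T.typeOf ((exists_typeOf_eq p).choose_spec.choose ∘ f)

@[simp]
theorem formula_mem_restrict {f : α → β} {p : T.CompleteType β} {φ : L.Formula α} :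
    Formula.equivSentence φ ∈ restrict f p ↔ Formula.equivSentence (φ.relabel f) ∈ p := by
  conv_rhs => rw [← (exists_typeOf_eq p).choose_spec.choose_spec]
  rw [restrict, formula_mem_typeOf, formula_mem_typeOf, Formula.realize_relabel]

theorem restrict_typeOf {M : Type*} [L.Structure M] [Nonempty M] [M ⊨ T] (f : α → β)
    (x : β → M) : restrict f (T.typeOf x) = T.typeOf (x ∘ f) :=
  ext_formula fun φ => by
    rw [formula_mem_restrict, formula_mem_typeOf, formula_mem_typeOf, Formula.realize_relabel]

theorem continuous_restrict (f : α → β) :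
    Continuous (restrict f : T.CompleteType β → T.CompleteType α) :=
  continuous_generateFrom_iff.2 <| forall_mem_range.2 <|
    Formula.equivSentence.surjective.forall.2 fun φ => by
      simpa only [preimage, mem_typesWith_iff, formula_mem_restrict] using
        isOpen_setOf_formula_mem (φ.relabel f)

theorem formula_mem_project_iff [Finite α] {f : α → β} {φ : L.Formula β} {p : T.CompleteType α} :
    Formula.equivSentence (project f φ) ∈ p ↔
      ∃ q : T.CompleteType β, Formula.equivSentence φ ∈ q ∧ restrict f q = p := by
  constructor
  · obtain ⟨M, x, rfl⟩ := exists_typeOf_eq p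
    rw [formula_mem_typeOf, realize_project]
    rintro ⟨y, hy, rfl⟩
    exact ⟨T.typeOf y, formula_mem_typeOf.2 hy, restrict_typeOf f y⟩
  · rintro ⟨q, hq, rfl⟩
    obtain ⟨M, y, rfl⟩ := exists_typeOf_eq q
    rw [restrict_typeOf, formula_mem_typeOf, realize_project]
    exact ⟨y, formula_mem_typeOf.1 hq, rfl⟩

theorem isOpenMap_restrict [Finite α] (f : α → β) :
    IsOpenMap (restrict f : T.CompleteType β → T.CompleteType α) := by
  rw [_root_.CompleteType.isTopologicalBasis_range_typesWith.isOpenMap_iff, forall_mem_range,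
    Formula.equivSentence.surjective.forall]
  intro φ
  convert! isOpen_setOf_formula_mem (T := T) (project f φ) using 1
  ext p
  exact formula_mem_project_iff.symm

theorem exists_comp_eq_and_typeOf_eq [Finite α] {N : Type*} [L.Structure N] [Nonempty N] [N ⊨ T]
    {f : α → β} {p : T.CompleteType β} (hp : IsOpen {p}) {x : α → N}
    (hx : T.typeOf x = restrict f p) : ∃ y : β → N, y ∘ f = x ∧ T.typeOf y = p := by
  obtain ⟨φ, hφp, hφ⟩ := isOpen_iff_formula.1 hp p rfl
  obtain ⟨y, hy, rfl⟩ := (realize_project f φ x).1 <| formula_mem_typeOf.1 <|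
    formula_mem_project_iff.2 ⟨p, hφp, hx.symm⟩
  exact ⟨y, rfl, hφ _ (formula_mem_typeOf.2 hy)⟩

theorem dense_realizedTypes (hT : T.IsComplete) (M : Type*) [L.Structure M] [Nonempty M]
    [M ⊨ T] : Dense (T.realizedTypes M α) := by
  refine dense_iff_formula.2 fun φ N x hφ => ?_
  -- Whether `φ` is satisfied in a model is expressed by a sentence, hence decided by `T`.
  have hN : (project Empty.elim φ).Realize (default : Empty → N) :=
    (realize_project ..).2 ⟨x, hφ, Subsingleton.elim _ _⟩
  obtain ⟨y, hy, -⟩ := (realize_project ..).1 <|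
    (typeOf_eq_typeOf_iff.1 (typeOf_eq_typeOf_of_isEmpty hT _ (default : Empty → M)) _).1 hN
  exact ⟨T.typeOf y, ⟨y, rfl⟩, formula_mem_typeOf.2 hy⟩

theorem finite_completeType_of_finite_model [Finite α] (hT : T.IsComplete) (M : Type*)
    [L.Structure M] [Nonempty M] [M ⊨ T] [Finite M] : Finite (T.CompleteType α) := by
  have hfin : (T.realizedTypes M α).Finite := finite_range _
  rwa [← finite_univ_iff, ← (dense_realizedTypes hT M).closure_eq, hfin.isClosed.closure_eq]

end CompleteType

section OmittingTypes

variable {T : L.Theory} {ι : Type w}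

/-- The types satisfying the Henkin condition for `θ`: if some element satisfies `θ`, with the
remaining variables interpreted as in the type, then so does one of these variables. -/
def henkinTypes (T : L.Theory) (θ : L.Formula (ι ⊕ Fin 1)) : Set (T.CompleteType ι) :=
  {p | Formula.equivSentence (θ.iExs (Fin 1)) ∈ p →
    ∃ k, Formula.equivSentence (θ.relabel (Sum.elim id fun _ => k)) ∈ p}

theorem typeOf_mem_henkinTypes_iff {M : Type*} [L.Structure M] [Nonempty M] [M ⊨ T]
    {θ : L.Formula (ι ⊕ Fin 1)} {x : ι → M} :
    T.typeOf x ∈ henkinTypes T θ ↔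
      ((∃ a, θ.Realize (Sum.elim x a)) → ∃ k, θ.Realize (Sum.elim x fun _ => x k)) := by
  simp only [henkinTypes, mem_ofPred_eq, formula_mem_typeOf, Formula.realize_iExs,
    Formula.realize_relabel, Sum.comp_elim, Function.comp_id]
  rfl

theorem isOpen_henkinTypes (θ : L.Formula (ι ⊕ Fin 1)) : IsOpen (henkinTypes T θ) := by
  simp only [henkinTypes, imp_iff_not_or, ofPred_or, ofPred_exists]
  exact (isClosed_setOf_formula_mem _).isOpen_compl.union <|
    isOpen_iUnion fun _ => isOpen_setOf_formula_mem _

theorem dense_henkinTypes [Infinite ι] (θ : L.Formula (ι ⊕ Fin 1)) :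
    Dense (henkinTypes T θ) := by
  classical
  refine dense_iff_formula.2 fun φ M x hφ => ?_
  by_cases hθ : ∃ a, θ.Realize (Sum.elim x a)
  swap
  · exact ⟨T.typeOf x, typeOf_mem_henkinTypes_iff.2 fun h => absurd h hθ, formula_mem_typeOf.2 hφ⟩
  obtain ⟨a, ha⟩ := hθ
  -- A variable free in neither formula can be reinterpreted as the witness.
  obtain ⟨k, hk⟩ := Infinite.exists_notMem_finset
    (BoundedFormula.freeVarFinset φ ∪ (BoundedFormula.freeVarFinset θ).toLeft)
  simp only [Finset.mem_union, Finset.mem_toLeft, not_or] at hk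
  let y := Function.update x k (a 0)
  have hφy : φ.Realize y := by
    refine (realize_congr_of_eqOn_freeVarFinset φ fun i hi => ?_).1 hφ
    exact (Function.update_of_ne (ne_of_mem_of_not_mem hi hk.1) _ _).symm
  have hθy : θ.Realize (Sum.elim y fun _ => y k) := by
    refine (realize_congr_of_eqOn_freeVarFinset θ ?_).1 ha
    rintro (i | i) hi
    · exact (Function.update_of_ne (fun h : i = k => hk.2 (h ▸ hi)) _ _).symm
    · rw [Subsingleton.elim i 0]
      exact (Function.update_self k (a 0) x).symm
  exact ⟨T.typeOf y, typeOf_mem_henkinTypes_iff.2 fun _ => ⟨k, hθy⟩, formula_mem_typeOf.2 hφy⟩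

theorem exists_elementarySubstructure_coe_eq_range {M : Type*} [L.Structure M] [Nonempty M]
    [M ⊨ T] {x : ι → M} (hx : ∀ θ, T.typeOf x ∈ henkinTypes T θ) :
    ∃ S : L.ElementarySubstructure M, (S : Set M) = range x := by
  suffices h : L.MeetsDefinable (range x) from ⟨h.toElementarySubstructure, h.closure_eq_self⟩
  rintro D ⟨a, ha⟩ hD
  obtain ⟨φ, hφ⟩ := definable_iff_exists_formula_sum.1 hD
  let θ : L.Formula (ι ⊕ Fin 1) := φ.relabel (Sum.map (rangeSplitting x) id)
  have mem_D_iff (b : M) : b ∈ D ↔ θ.Realize (Sum.elim x fun _ => b) := by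
    have := Set.ext_iff.1 hφ fun _ => b
    simpa only [θ, Formula.realize_relabel, Sum.elim_comp_map, Function.comp_id,
      comp_rangeSplitting, mem_ofPred_eq] using this
  obtain ⟨k, hk⟩ := typeOf_mem_henkinTypes_iff.1 (hx θ) ⟨fun _ => a, (mem_D_iff a).1 ha⟩
  exact ⟨x k, (mem_D_iff _).2 hk, k, rfl⟩

theorem exists_countable_modelType_disjoint_realizedTypes [Countable L.Symbols]
    (hT : T.IsSatisfiable) [Countable ι] {α : ι → Type w'} [∀ i, Finite (α i)]
    {A : ∀ i, Set (T.CompleteType (α i))} (hA : ∀ i, IsMeagre (A i)) :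
    ∃ M : ModelType.{u, v, max u v} T, Countable M ∧
      ∀ i, Disjoint (T.realizedTypes M (α i)) (A i) := by
  have : Nonempty (T.CompleteType ℕ) := CompleteType.nonempty_iff.2 hT
  have hH : ∀ᶠ p in residual (T.CompleteType ℕ), ∀ θ, p ∈ henkinTypes T θ :=
    eventually_countable_forall.2 fun θ =>
      residual_of_dense_open (isOpen_henkinTypes θ) (dense_henkinTypes θ)
  have hO : ∀ᶠ p in residual (T.CompleteType ℕ), ∀ i (f : α i → ℕ), restrict f p ∉ A i :=
    eventually_countable_forall.2 fun i => eventually_countable_forall.2 fun f =>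
      (hA i).preimage_of_isOpenMap (continuous_restrict f) (isOpenMap_restrict f)
  obtain ⟨p, hpH, hpO⟩ := (dense_of_mem_residual (hH.and hO)).nonempty
  obtain ⟨M, x, rfl⟩ := exists_typeOf_eq p
  obtain ⟨S, hS⟩ := exists_elementarySubstructure_coe_eq_range hpH
  refine ⟨S.toModel T, (hS ▸ countable_range x : (S : Set M).Countable).to_subtype, fun i => ?_⟩
  rw [disjoint_left]
  rintro _ ⟨z : α i → S, rfl⟩ hz
  choose f hf using fun j => (hS ▸ (z j).2 : (z j : M) ∈ range x)
  refine hpO i f ?_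
  rwa [restrict_typeOf, show x ∘ f = S.subtype ∘ z from funext hf,
    typeOf_comp_elementaryEmbedding]

theorem isMeagre_singleton_of_not_isOpen {p : T.CompleteType ι} (hp : ¬ IsOpen {p}) :
    IsMeagre {p} :=
  (isClosed_singleton.isNowhereDense_iff.2 <| interior_eq_empty_iff_dense_compl.2 <|
    dense_compl_singleton_iff_not_open.2 hp).isMeagre

end OmittingTypes

section BackAndForth

variable {M : Type*} [L.Structure M] {N : Type*} [L.Structure N]

variable (L) in
/-- A relation between two structures, given by its graph, is partial elementary if related
tuples satisfy the same formulas. The formula `x₀ = x₁` makes it the graph of a partial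
injection. -/
def IsPartialElementary (s : Set (M × N)) : Prop :=
  ∀ ⦃n : ℕ⦄ (φ : L.Formula (Fin n)) (x : Fin n → M × N), (∀ i, x i ∈ s) →
    (φ.Realize (Prod.fst ∘ x) ↔ φ.Realize (Prod.snd ∘ x))

namespace IsPartialElementary

theorem preimage_swap {s : Set (M × N)} (hs : IsPartialElementary L s) :
    IsPartialElementary L (Prod.swap ⁻¹' s) :=
  fun _ φ x hx => (hs φ (Prod.swap ∘ x) hx).symm

theorem sUnion {c : Set (Set (M × N))} (hc : DirectedOn (· ⊆ ·) c) (hne : c.Nonempty)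
    (h : ∀ s ∈ c, IsPartialElementary L s) : IsPartialElementary L (⋃₀ c) := by
  intro n φ x hx
  obtain ⟨s, hsc, hs⟩ := hc.exists_mem_subset_of_finite_of_subset_sUnion hne
    (finite_range x) (range_subset_iff.2 hx)
  exact h s hsc φ x fun i => hs ⟨i, rfl⟩

theorem nonempty_equiv {s : Set (M × N)} (hs : IsPartialElementary L s)
    (hdom : ∀ a, ∃ b, (a, b) ∈ s) (hcod : ∀ b, ∃ a, (a, b) ∈ s) : Nonempty (M ≃[L] N) := by
  choose f hf using hdom
  let e : M ↪ₑ[L] N := ⟨f, fun _ φ x => (hs φ (fun i => (x i, f (x i))) fun i => hf (x i)).symm⟩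
  have he : Function.Surjective f := fun b => by
    obtain ⟨a, ha⟩ := hcod b
    have := hs ((Term.var 0).equal (Term.var 1)) ![(a, f a), (a, b)]
      (Fin.forall_fin_two.2 ⟨hf a, ha⟩)
    exact ⟨a, by simpa using this⟩
  exact ⟨⟨Equiv.ofBijective f ⟨e.injective, he⟩, e.map_fun, e.map_rel⟩⟩

end IsPartialElementary

variable {T : L.Theory} [Nonempty M] [M ⊨ T] [Nonempty N] [N ⊨ T]

theorem isPartialElementary_range_iff {n : ℕ} {x : Fin n → M × N} :
    IsPartialElementary L (range x) ↔ T.typeOf (Prod.fst ∘ x) = T.typeOf (Prod.snd ∘ x) := by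
  rw [typeOf_eq_typeOf_iff]
  refine ⟨fun h φ => h φ x mem_range_self, fun h m φ y hy => ?_⟩
  choose g hg using hy
  obtain rfl : x ∘ g = y := funext hg
  simpa only [Formula.realize_relabel, Function.comp_assoc] using h (φ.relabel g)

theorem exists_isPartialElementary_insert [∀ n, DiscreteTopology (T.CompleteType (Fin n))]
    {s : Set (M × N)} (hfin : s.Finite) (hs : IsPartialElementary L s) (a : M) :
    ∃ b, IsPartialElementary L (insert (a, b) s) := by
  obtain ⟨n, x, -, rfl⟩ := hfin.fin_param
  have hx : T.typeOf (Prod.snd ∘ x) =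
      restrict Fin.succ (T.typeOf (Fin.cons a (Prod.fst ∘ x) : Fin (n + 1) → M)) := by
    rw [restrict_typeOf, Fin.cons_comp_succ, isPartialElementary_range_iff.1 hs]
  obtain ⟨y, hyx, hy⟩ := exists_comp_eq_and_typeOf_eq (isOpen_discrete _) hx
  refine ⟨y 0, ?_⟩
  rw [← Fin.range_cons, isPartialElementary_range_iff (T := T), Fin.comp_cons, Fin.comp_cons,
    ← hyx, ← hy]
  exact congrArg _ (Fin.cons_self_tail y).symm

theorem nonempty_equiv_of_discreteTopology [∀ n, DiscreteTopology (T.CompleteType (Fin n))]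
    (hT : T.IsComplete) [Countable M] [Countable N] : Nonempty (M ≃[L] N) := by
  let P := {s : Set (M × N) // s.Finite ∧ IsPartialElementary L s}
  let p₀ : P := ⟨range Fin.elim0, finite_range _,
    isPartialElementary_range_iff.2 (typeOf_eq_typeOf_of_isEmpty hT _ _)⟩
  have forth (s : P) (a : M) : ∃ t : P, (∃ b, (a, b) ∈ t.1) ∧ s ≤ t :=
    have ⟨b, hb⟩ := exists_isPartialElementary_insert (T := T) s.2.1 s.2.2 a
    ⟨⟨_, s.2.1.insert _, hb⟩, ⟨b, mem_insert _ _⟩, subset_insert _ _⟩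
  have back (s : P) (b : N) : ∃ t : P, (∃ a, (a, b) ∈ t.1) ∧ s ≤ t :=
    have ⟨a, ha⟩ := exists_isPartialElementary_insert (T := T)
      (s.2.1.preimage Prod.swap_injective.injOn) s.2.2.preimage_swap b
    ⟨⟨_, (s.2.1.preimage Prod.swap_injective.injOn).insert _ |>.preimage
      Prod.swap_injective.injOn, ha.preimage_swap⟩, ⟨a, mem_insert _ _⟩,
      fun _ hx => mem_insert_of_mem _ hx⟩
  have := Encodable.ofCountable (M ⊕ N)
  let D : M ⊕ N → Order.Cofinal P := Sum.elim
    (fun a => ⟨{t | ∃ b, (a, b) ∈ t.1}, fun s => forth s a⟩)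
    (fun b => ⟨{t | ∃ a, (a, b) ∈ t.1}, fun s => back s b⟩)
  let I := Order.idealOfCofinals p₀ D
  have hI : IsPartialElementary L (⋃₀ (Subtype.val '' (I : Set P))) :=
    .sUnion (directedOn_image.2 I.directed) (I.nonempty.image _) <|
      forall_mem_image.2 fun s _ => s.2.2
  refine hI.nonempty_equiv (fun a => ?_) fun b => ?_
  · obtain ⟨s, ⟨b, hb⟩, hs⟩ := Order.cofinal_meets_idealOfCofinals p₀ D (.inl a)
    exact ⟨b, s, mem_image_of_mem _ hs, hb⟩
  · obtain ⟨s, ⟨a, ha⟩, hs⟩ := Order.cofinal_meets_idealOfCofinals p₀ D (.inr b)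
    exact ⟨a, s, mem_image_of_mem _ hs, ha⟩

end BackAndForth

section Categorical

variable {T : L.Theory}

theorem exists_countable_modelType_mem_realizedTypes [Countable L.Symbols] [Countable α]
    (p : T.CompleteType α) :
    ∃ M : ModelType.{u, v, max u v w} T, Countable M ∧ p ∈ T.realizedTypes M α := by
  obtain ⟨M, x, rfl⟩ := exists_typeOf_eq p
  obtain hM | hM := finite_or_infinite M
  · exact ⟨M, inferInstance, x, rfl⟩
  have hL : L.card ≤ ℵ₀ := mk_le_aleph0
  obtain ⟨S, hxS, hS⟩ := exists_elementarySubstructure_card_eq L (range x) ℵ₀ le_rfl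
    (by simpa only [lift_aleph0, lift_le_aleph0, le_aleph0_iff_set_countable]
      using countable_range x) (by simpa using hL) (by simp)
  have : Countable S := mk_le_aleph0_iff.1 (lift_injective hS).le
  exact ⟨S.toModel T, this, fun i => ⟨x i, hxS ⟨i, rfl⟩⟩,
    (typeOf_comp_elementaryEmbedding S.subtype _).symm⟩

theorem exists_modelType_mk_eq_aleph0_nonempty_equiv (T : L.Theory) (M : Type*) [L.Structure M]
    [M ⊨ T] [Countable M] [Infinite M] :
    ∃ N : ModelType.{u, v, w} T, #N = ℵ₀ ∧ Nonempty (M ≃[L] N) := by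
  obtain ⟨e⟩ : Nonempty (M ≃ ULift.{w} ℕ) := nonempty_equiv_of_countable
  exact ⟨(ModelType.of T M).equivInduced e, mk_eq_aleph0 (ULift ℕ), ⟨e.inducedStructureEquiv⟩⟩

theorem nonempty_equiv_of_categorical (h : (ℵ₀ : Cardinal.{w}).Categorical T)
    (M : Type*) [L.Structure M] [M ⊨ T] [Countable M] [Infinite M]
    (N : Type*) [L.Structure N] [N ⊨ T] [Countable N] [Infinite N] : Nonempty (M ≃[L] N) := by
  obtain ⟨M', hM', ⟨eM⟩⟩ := exists_modelType_mk_eq_aleph0_nonempty_equiv T M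
  obtain ⟨N', hN', ⟨eN⟩⟩ := exists_modelType_mk_eq_aleph0_nonempty_equiv T N
  obtain ⟨e⟩ := h M' N' hM' hN'
  exact ⟨eN.symm.comp (e.comp eM)⟩

theorem finite_completeType_of_categorical [Countable L.Symbols] (hT : T.IsComplete)
    (h : (ℵ₀ : Cardinal.{w'}).Categorical T) [Finite α] : Finite (T.CompleteType α) := by
  by_contra hfin
  obtain ⟨p, hp⟩ : ∃ p : T.CompleteType α, ¬ IsOpen {p} := by
    by_contra! hopen
    have := discreteTopology_iff_isOpen_singleton.2 hopen
    exact hfin finite_of_compact_of_discrete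
  obtain ⟨M, hM, x, rfl⟩ := exists_countable_modelType_mem_realizedTypes p
  obtain ⟨N, hN, hpN⟩ := exists_countable_modelType_disjoint_realizedTypes hT.1 fun _ : Unit =>
    isMeagre_singleton_of_not_isOpen hp
  have : Infinite M := not_finite_iff_infinite.1 fun _ =>
    hfin (finite_completeType_of_finite_model hT M)
  have : Infinite N := not_finite_iff_infinite.1 fun _ =>
    hfin (finite_completeType_of_finite_model hT N)
  obtain ⟨e⟩ := nonempty_equiv_of_categorical h M N
  exact disjoint_singleton_right.1 (hpN ()) ⟨e ∘ x,
    typeOf_comp_elementaryEmbedding e.toElementaryEmbedding x⟩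

theorem categorical_of_finite_completeType (hT : T.IsComplete)
    [∀ n, Finite (T.CompleteType (Fin n))] : (ℵ₀ : Cardinal.{w}).Categorical T := by
  intro M N hM hN
  have : Countable M := mk_le_aleph0_iff.1 hM.le
  have : Countable N := mk_le_aleph0_iff.1 hN.le
  exact nonempty_equiv_of_discreteTopology hT

end Categorical

end RyllNardzewski

theorem ryll_nardzewski_general.{u, v, w} {L : FirstOrder.Language.{u, v}} [Countable L.Symbols]
    {T : L.Theory} (hT : T.IsComplete) :
    (ℵ₀ : Cardinal.{w}).Categorical T ↔ ∀ n : ℕ, Finite (T.CompleteType (Fin n)) :=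
  ⟨fun h _ => RyllNardzewski.finite_completeType_of_categorical hT h,
    fun _ => RyllNardzewski.categorical_of_finite_completeType hT⟩

/-- **Ryll-Nardzewski theorem**: a complete consistent theory `T` in a countable language,
all of whose models are infinite, is `ℵ₀`-categorical iff for every `n` it has only
finitely many complete `n`-types. -/
theorem ryll_nardzewski {L : Language} [Countable L.Symbols]
    (T : L.Theory) (hT : T.IsMaximal)
    (hInf : ∀ M : Theory.ModelType.{0, 0, 0} T, Infinite M) :
    (Cardinal.aleph0.{0}).Categorical T ↔
      ∀ n : ℕ, Finite (T.CompleteType (Fin n)) :=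
  ryll_nardzewski_general hT.isComplete
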